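/- Given an integer h ≥ 2, for any ε > 0 there exists a positive integer g = g(h,ε) such that, for any function f : ℤ → ℕ ∪ {∞} satisfying liminf_{|n|→∞} f(n) ≥ g, there exists a set A of integers such that r_{A,h}(n) = f(n) for all n ∈ ℤ and A(x) ≫ x^{1/h − ε}, i.e. there is a constant C > 0 with A(x) ≥ C·x^{1/h − ε} for all sufficiently large x. -/

import Mathlib

/-!
The set is built greedily, two elements at a time. Let `A` be the finite set reached after `t`
steps and put `τ = t + t₀`. If `v` still has fewer than `f v` representations, adjoin `-c` and
`v + (h-1)c` for a suitable integer `0 ≤ c < M τ^(h+δ)`. A sum of at most `h` elements using `i`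
copies of `-c` and `j` copies of `v + (h-1)c` has the form `e c + (j v + s)` with
`e = -i + j(h-1)` and `s` a sum of at most `h - 1` elements of `A`. Unless `i = j = 0`, the
coefficient `e` vanishes only for `(i, j) = (h-1, 1)`, and that case yields exactly one new
representation of `v` (`MS_step`). The other new sums, the *hits* of the step, are values at `c`
of `O(τ^(h-1))` nonconstant affine forms, so an averaging argument over `c` (`select`) controls
them.

Two things are required of `c`. First, no element of a set of `O(τ)` forbidden integers is hit:
the forbidden integers are those with `f` small, those that have already been targets, and those
that have been hit `J + 1` times. Second, for each `j < J`, among the integers hit more than `j`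
times at most `O(τ^(h-1-(j+1)δ))` are hit again. With `δ = (h-1)/J`, the second requirement keeps
the number of integers hit more than `j` times below `C τ^(h-jδ)`; for `j = J` this is `C τ`, which
is what makes the first requirement consistent. Since no integer is hit more than `J + 1` times,
and each hit creates boundedly many representations, an integer that was never a target has at most
`g` representations, where `g` depends on `h` and `J` only.

If every integer is scheduled as a target infinitely often, the union of the finite sets has
representation function exactly `f`; the distinct elements `-c` produced by successive steps give
`A(x) ≫ x^(1/(h+δ))`, and `δ ≤ ε` once `J` is large.
-/

open Filter Set

/-- `repFn A h n` is the number of representations of `n` in the form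
`n = a 0 + ⋯ + a (h-1)` with `a 0 ≤ ⋯ ≤ a (h-1)` and all `a i ∈ A`;
values lie in `ℕ ∪ {∞}`. -/
noncomputable def repFn (A : Set ℤ) (h : ℕ) (n : ℤ) : ℕ∞ :=
  {a : Fin h → ℤ | Monotone a ∧ (∀ i, a i ∈ A) ∧ ∑ i, a i = n}.encard

/-- `countAbs A x` is the number of `a ∈ A` with `|a| ≤ x`. -/
noncomputable def countAbs (A : Set ℤ) (x : ℝ) : ℕ :=
  {a : ℤ | a ∈ A ∧ |(a : ℝ)| ≤ x}.ncard

/-! ### Representations as multisets -/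

/-- The representations of `n` as an unordered sum of `l` elements of `A`, encoded as multisets. -/
def MS (A : Set ℤ) (l : ℕ) (n : ℤ) : Set (Multiset ℤ) :=
  {s | Multiset.card s = l ∧ (∀ a ∈ s, a ∈ A) ∧ s.sum = n}

lemma MS_mono {A B : Set ℤ} (hAB : A ⊆ B) (l : ℕ) (n : ℤ) : MS A l n ⊆ MS B l n :=
  fun _ hs => ⟨hs.1, fun a ha => hAB (hs.2.1 a ha), hs.2.2⟩

lemma repFn_eq (A : Set ℤ) (h : ℕ) (n : ℤ) : repFn A h n = (MS A h n).encard := by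
  have hinj : InjOn (fun a : Fin h → ℤ => (List.ofFn a : Multiset ℤ))
      {a | Monotone a ∧ (∀ i, a i ∈ A) ∧ ∑ i, a i = n} := by
    intro a ha b hb hab
    exact List.ofFn_injective
      ((Multiset.coe_eq_coe.1 hab).eq_of_sortedLE ha.1.sortedLE_ofFn hb.1.sortedLE_ofFn)
  rw [repFn, ← hinj.encard_image]
  congr 1
  ext s
  constructor
  · rintro ⟨a, ⟨-, h2, h3⟩, rfl⟩
    refine ⟨by simp, ?_, ?_⟩
    · intro b hb
      simp only [Multiset.mem_coe, List.mem_ofFn] at hb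
      obtain ⟨i, rfl⟩ := hb
      exact h2 i
    · simpa [List.sum_ofFn] using h3
  · rintro ⟨h1, h2, h3⟩
    have hlen : (s.sort (· ≤ ·)).length = h := by rw [Multiset.length_sort, h1]
    subst hlen
    have e : List.ofFn (s.sort (· ≤ ·)).get = s.sort (· ≤ ·) := List.ofFn_get _
    have e' : ((List.ofFn (s.sort (· ≤ ·)).get : List ℤ) : Multiset ℤ) = s := by
      rw [e, Multiset.sort_eq]
    refine ⟨(s.sort (· ≤ ·)).get, ⟨?_, ?_, ?_⟩, e'⟩
    · rw [← List.sortedLE_ofFn_iff, e]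
      exact (Multiset.pairwise_sort s (· ≤ ·)).sortedLE
    · intro i
      exact h2 _ ((Multiset.mem_sort (r := (· ≤ ·))).1 (List.get_mem _ i))
    · rw [← List.sum_ofFn, e, ← Multiset.sum_coe, Multiset.sort_eq, h3]

/-- A bound on the number of representations passes to increasing unions, since each of finitely
many representations uses finitely many elements. -/
lemma MS_iUnion_encard_le {A : ℕ → Set ℤ} (hA : Monotone A) (h : ℕ) (n : ℤ) (b : ℕ∞)
    (hb : ∀ t, (MS (A t) h n).encard ≤ b) : (MS (⋃ t, A t) h n).encard ≤ b := by
  have hfin : ∀ s ∈ MS (⋃ t, A t) h n, ∃ t, s ∈ MS (A t) h n := by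
    rintro s ⟨h1, h2, h3⟩
    have : ∀ r : Multiset ℤ, (∀ a ∈ r, a ∈ ⋃ t, A t) → ∃ t, ∀ a ∈ r, a ∈ A t := by
      intro r
      induction r using Multiset.induction_on with
      | empty => simp
      | cons a r ih =>
        intro hr
        obtain ⟨t, ht⟩ := ih fun b hb => hr b (Multiset.mem_cons_of_mem hb)
        obtain ⟨t', ht'⟩ := mem_iUnion.1 (hr a (Multiset.mem_cons_self _ _))
        refine ⟨max t t', fun b hb => ?_⟩
        rcases Multiset.mem_cons.1 hb with rfl | hb
        · exact hA (le_max_right _ _) ht'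
        · exact hA (le_max_left _ _) (ht b hb)
    obtain ⟨t, ht⟩ := this s h2
    exact ⟨t, h1, ht, h3⟩
  by_contra hcon
  push Not at hcon
  obtain ⟨T, hT1, hT2⟩ := Set.exists_subset_encard_eq (Order.add_one_le_of_lt hcon)
  have hbt : b ≠ ⊤ := hcon.ne_top
  have hTf : T.Finite := by
    rw [← Set.encard_lt_top_iff, hT2]
    exact ENat.add_lt_top.2 ⟨hbt.lt_top, by simp⟩
  have : ∃ t, T ⊆ MS (A t) h n := by
    choose! φ hφ using hfin
    obtain ⟨m, hm⟩ := (hTf.image φ).bddAbove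
    refine ⟨m, fun s hs => ?_⟩
    exact MS_mono (hA (hm (mem_image_of_mem φ hs))) _ _ (hφ s (hT1 hs))
  obtain ⟨t, ht⟩ := this
  have h1 := (Set.encard_le_encard ht).trans (hb t)
  rw [hT2] at h1
  exact absurd h1 (not_le.2 (ENat.lt_add_one_iff hbt |>.2 le_rfl))

/-! ### The effect of one step on representations -/

/-- The `k`-fold sumset of `A ∪ {0}`, that is, the set of all sums of at most `k` elements of
`A`. -/
def sums (A : Finset ℤ) : ℕ → Finset ℤ
  | 0 => {0}
  | k + 1 => Finset.image₂ (· + ·) (insert 0 A) (sums A k)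

lemma card_sums_le (A : Finset ℤ) (k : ℕ) : (sums A k).card ≤ (A.card + 1) ^ k := by
  induction k with
  | zero => simp [sums]
  | succ k ih =>
    rw [sums, pow_succ']
    exact (Finset.card_image₂_le _ _ _).trans
      (Nat.mul_le_mul (Finset.card_insert_le _ _) ih)

lemma sum_mem_sums (A : Finset ℤ) (k : ℕ) (s : Multiset ℤ) (hs : Multiset.card s ≤ k)
    (hA : ∀ a ∈ s, a ∈ A) : s.sum ∈ sums A k := by
  induction k generalizing s with
  | zero =>
    have : s = 0 := by simpa using hs
    simp [this, sums]
  | succ k ih =>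
    rw [sums, Finset.mem_image₂]
    rcases s.empty_or_exists_mem with rfl | ⟨a, ha⟩
    · exact ⟨0, by simp, 0, by simpa using ih 0 (by simp) (by simp), by simp⟩
    · obtain ⟨r, rfl⟩ := Multiset.exists_cons_of_mem ha
      refine ⟨a, by simp [hA], r.sum, ih r (by simpa using hs) fun b hb => hA b ?_, by simp⟩
      exact Multiset.mem_cons_of_mem hb

/-- Any representation using two additional elements splits off its copies of them. -/
lemma MS_split (A : Set ℤ) {x y : ℤ} (hxy : x ≠ y) {l : ℕ} {n : ℤ} {s : Multiset ℤ}
    (hs : s ∈ MS (A ∪ {x, y}) l n) :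
    ∃ i j : ℕ, i + j ≤ l ∧ ∃ r ∈ MS A (l - (i + j)) (n - i * x - j * y),
      s = Multiset.replicate i x + Multiset.replicate j y + r := by
  obtain ⟨hc, hA, hn⟩ := hs
  have key : s = Multiset.replicate (s.count x) x + Multiset.replicate (s.count y) y
      + s.filter (fun a => a ≠ x ∧ a ≠ y) := by
    ext a
    simp only [Multiset.count_add, Multiset.count_replicate, Multiset.count_filter]
    by_cases h1 : a = x
    · subst h1; simp [hxy.symm]
    · by_cases h2 : a = y
      · subst h2; simp [hxy]
      · simp [h1, h2, Ne.symm h1, Ne.symm h2]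
  have hcard := congrArg Multiset.card key
  have hsum := congrArg Multiset.sum key
  simp only [Multiset.card_add, Multiset.card_replicate, Multiset.sum_add,
    Multiset.sum_replicate, nsmul_eq_mul] at hcard hsum
  refine ⟨s.count x, s.count y, by omega, _, ⟨?_, ?_, ?_⟩, key⟩
  · omega
  · intro a ha
    rw [Multiset.mem_filter] at ha
    have := hA a ha.1
    simp only [mem_union, mem_insert_iff, mem_singleton_iff] at this
    tauto
  · linarith

/-- The affine forms `e c + d`, encoded as pairs `(e, d)` with `e ≠ 0`, whose values at `c` contain all
sums of at most `h` elements that become available when `-c` and `v + (h-1)c` are adjoined to `A`,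
except for the intended sum `(h-1)(-c) + (v + (h-1)c) = v`. -/
def forms (A : Finset ℤ) (v : ℤ) (h : ℕ) : Finset (ℤ × ℤ) :=
  (((Finset.range (h + 1) ×ˢ Finset.range (h + 1)) ×ˢ sums A (h - 1)).image
    fun q => (-(q.1.1 : ℤ) + q.1.2 * ((h : ℤ) - 1), q.1.2 * v + q.2)).filter fun p => p.1 ≠ 0

lemma card_forms_le (A : Finset ℤ) (v : ℤ) (h : ℕ) :
    (forms A v h).card ≤ (h + 1) ^ 2 * (A.card + 1) ^ (h - 1) := by
  refine (Finset.card_filter_le _ _).trans (Finset.card_image_le.trans ?_)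
  rw [Finset.card_product, Finset.card_product, Finset.card_range, sq]
  exact Nat.mul_le_mul le_rfl (card_sums_le _ _)

/-- The integers hit when `-c` and `v + (h-1)c` are adjoined to `A`. -/
def hits (A : Finset ℤ) (v : ℤ) (h : ℕ) (c : ℤ) : Finset ℤ :=
  (forms A v h).image fun p => p.1 * c + p.2

/-- After adjoining `-c` and `v + (h-1)c`, a representation of order at most `h` is old, or represents
a hit integer, or is the intended new representation of the target `v`. -/
lemma MS_step {A : Finset ℤ} {v c : ℤ} {h l : ℕ} (hh : 2 ≤ h) (hl : l ≤ h)
    (hxy : -c ≠ v + (h - 1) * c) {u : ℤ} {s : Multiset ℤ}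
    (hs : s ∈ MS (↑A ∪ {-c, v + (h - 1) * c}) l u) :
    s ∈ MS A l u ∨ u ∈ hits A v h c ∨
      (l = h ∧ u = v ∧ s = Multiset.replicate (h - 1) (-c) + {v + (h - 1) * c}) := by
  obtain ⟨i, j, hij, r, ⟨hr1, hr2, hr3⟩, rfl⟩ := MS_split _ hxy hs
  have hu := hs.2.2
  simp only [Multiset.sum_add, Multiset.sum_replicate, nsmul_eq_mul] at hu
  by_cases he : -(i : ℤ) + j * ((h : ℤ) - 1) = 0
  · have hj : j = 0 ∨ j = 1 := by
      by_contra hcon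
      have h2 : 2 ≤ j := by omega
      zify at h2 hij hl hh
      nlinarith
    rcases hj with rfl | rfl
    · have : i = 0 := by simpa using he
      subst this
      left; exact ⟨by simpa using hr1, by simpa using hr2, by simpa using hr3⟩
    · right; right
      have hi : i = h - 1 := by omega
      subst hi
      have hlh : l = h := by omega
      have hr0 : r = 0 := by
        rw [← Multiset.card_eq_zero]; omega
      subst hr0
      refine ⟨hlh, ?_, by simp⟩
      rw [← hu]
      push_cast [Nat.cast_sub (show 1 ≤ h by omega)]
      simp
  · by_cases h0 : i + j = 0
    · obtain ⟨rfl, rfl⟩ : i = 0 ∧ j = 0 := by omega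
      simp at he
    · right; left
      rw [hits, Finset.mem_image]
      refine ⟨(-(i : ℤ) + j * ((h : ℤ) - 1), j * v + r.sum), ?_, ?_⟩
      · rw [forms, Finset.mem_filter, Finset.mem_image]
        refine ⟨⟨((i, j), r.sum), ?_, rfl⟩, he⟩
        simp only [Finset.mem_product, Finset.mem_range]
        exact ⟨⟨by omega, by omega⟩, sum_mem_sums _ _ _ (by omega) hr2⟩
      · simp only; rw [← hu]; ring

/-- Adjoining two elements creates boundedly many new representations of order `l`, if all numbers of
representations of smaller order are bounded: a new representation is determined by the
multiplicities of the two new elements and a representation of smaller order. -/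
lemma encard_MS_step_le {A : Set ℤ} {x y : ℤ} (hxy : x ≠ y) {l h : ℕ} (hl : l ≤ h) (u : ℤ)
    (B : ℕ∞) (hB : ∀ k < l, ∀ n, (MS A k n).encard ≤ B) :
    (MS (A ∪ {x, y}) l u).encard ≤ (MS A l u).encard + ((h + 1) ^ 2 : ℕ) * B := by
  have hsub : MS (A ∪ {x, y}) l u ⊆ MS A l u ∪
      ⋃ q ∈ Finset.range (h + 1) ×ˢ Finset.range (h + 1),
        {s | 0 < q.1 + q.2 ∧ q.1 + q.2 ≤ l ∧
          s ∈ (fun r => Multiset.replicate q.1 x + Multiset.replicate q.2 y + r) ''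
            MS A (l - (q.1 + q.2)) (u - q.1 * x - q.2 * y)} := by
    intro s hs
    obtain ⟨i, j, hij, r, hr, rfl⟩ := MS_split _ hxy hs
    by_cases h0 : i + j = 0
    · obtain ⟨rfl, rfl⟩ : i = 0 ∧ j = 0 := by omega
      left; simpa using hr
    · right
      simp only [mem_iUnion]
      exact ⟨(i, j), by simp; omega, by simp; omega, hij, r, hr, rfl⟩
  refine (Set.encard_le_encard hsub).trans ((Set.encard_union_le _ _).trans ?_)
  gcongr
  refine (Finset.set_encard_biUnion_le _ _).trans ((Finset.sum_le_card_nsmul _ _ B ?_).trans ?_)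
  · intro q _
    by_cases h0 : 0 < q.1 + q.2 ∧ q.1 + q.2 ≤ l
    · refine (Set.encard_le_encard fun s hs => hs.2.2).trans ?_
      exact (Set.encard_image_le _ _).trans (hB _ (by omega) _)
    · refine le_of_eq_of_le (b := 0) ?_ (by simp)
      rw [Set.encard_eq_zero, Set.eq_empty_iff_forall_notMem]
      exact fun s hs => h0 ⟨hs.1, hs.2.1⟩
  · simp [sq]

/-! ### Averaging over the parameter -/

/-- Choice of the parameter `c` by averaging over `0 ≤ c < N`: the values at `c` of nonconstant affine
forms can avoid a small set `B`, while they meet each of the sets `V 0, …, V (J-1)` in at most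
`2J` times the expected number of points. -/
lemma select (P : Finset (ℤ × ℤ)) (hP : ∀ p ∈ P, p.1 ≠ 0) (N : ℕ) (hN : 0 < N)
    (B E : Finset ℤ) (hB : 2 * (P.card * B.card + E.card) ≤ N) (J : ℕ) (V : ℕ → Finset ℤ) :
    ∃ c : ℤ, 0 ≤ c ∧ c < N ∧ c ∉ E ∧ (∀ p ∈ P, p.1 * c + p.2 ∉ B) ∧
      ∀ j < J, N * (V j ∩ P.image fun p => p.1 * c + p.2).card ≤
        2 * J * P.card * (V j).card := by
  classical
  set X : Finset ℤ := Finset.Ico 0 (N : ℤ) with hX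
  set D : Finset ℤ := E ∪ (P ×ˢ B).image fun q => (q.2 - q.1.2) / q.1.1 with hD
  have hDc : D.card ≤ P.card * B.card + E.card := by
    refine (Finset.card_union_le _ _).trans ?_
    rw [add_comm, ← Finset.card_product]
    gcongr
    exact Finset.card_image_le
  set G := X \ D with hG
  have hGc : N ≤ 2 * G.card := by
    have h1 : X.card - D.card ≤ G.card := Finset.le_card_sdiff _ _
    have h2 : X.card = N := by simp [hX]
    omega
  have hgood : ∀ c ∈ G, 0 ≤ c ∧ c < N ∧ c ∉ E ∧ ∀ p ∈ P, p.1 * c + p.2 ∉ B := by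
    intro c hc
    simp only [hG, hX, hD, Finset.mem_sdiff, Finset.mem_Ico, Finset.mem_union, not_or] at hc
    refine ⟨hc.1.1, hc.1.2, hc.2.1, fun p hp hpB => hc.2.2 ?_⟩
    rw [Finset.mem_image]
    refine ⟨(p, p.1 * c + p.2), Finset.mem_product.2 ⟨hp, hpB⟩, ?_⟩
    simp [hP p hp]
  by_contra hcon
  have hbad : ∀ c ∈ G, ∃ j < J, 2 * J * P.card * (V j).card <
      N * (V j ∩ P.image fun p => p.1 * c + p.2).card := by
    intro c hc
    by_contra hc'
    push Not at hc'
    obtain ⟨h1, h2, h3, h4⟩ := hgood c hc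
    exact hcon ⟨c, h1, h2, h3, h4, hc'⟩
  -- For fixed `j`, a pair `(p, n)` with `n ∈ V j` determines `c`, as `p` is not constant.
  have hsum : ∀ j, ∀ G' ⊆ G, ∑ c ∈ G', (V j ∩ P.image fun p => p.1 * c + p.2).card ≤
      P.card * (V j).card := by
    intro j G' _
    rw [← Finset.card_sigma, ← Finset.card_product]
    have : ∀ q ∈ G'.sigma (fun c => V j ∩ P.image fun p => p.1 * c + p.2),
        ∃ p ∈ P, p.1 * q.1 + p.2 = q.2 := by
      rintro ⟨c, n⟩ hq
      simp only [Finset.mem_sigma, Finset.mem_inter, Finset.mem_image] at hq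
      exact hq.2.2
    choose! φ hφ1 hφ2 using this
    refine Finset.card_le_card_of_injOn (fun q => (φ q, q.2)) ?_ ?_
    · intro q hq
      have h1 := hφ1 q hq
      simp only [Finset.mem_coe, Finset.mem_sigma, Finset.mem_inter] at hq
      exact Finset.mem_coe.2 (Finset.mem_product.2 ⟨h1, hq.2.1⟩)
    · rintro q hq q' hq' heq
      simp only [Prod.mk.injEq] at heq
      have e1 := hφ2 q hq
      have e2 := hφ2 q' hq'
      rw [← heq.1, ← heq.2, ← e1] at e2
      have e3 : (φ q).1 * q'.1 = (φ q).1 * q.1 := by linarith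
      have e4 := mul_left_cancel₀ (hP _ (hφ1 q hq)) e3
      obtain ⟨c, n⟩ := q
      obtain ⟨c', n'⟩ := q'
      simp only at e4 heq
      rw [e4, heq.2]
  -- By Markov's inequality, each `j` spoils fewer than `N / (2J)` values of `c`, whereas at least
  -- `N / 2` values satisfy the other requirements.
  let Gj : ℕ → Finset ℤ := fun j => G.filter fun c => 2 * J * P.card * (V j).card <
      N * (V j ∩ P.image fun p => p.1 * c + p.2).card
  have hGj : ∀ j, 2 * J * (Gj j).card < N := by
    intro j
    rcases (Gj j).eq_empty_or_nonempty with h0 | h0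
    · rw [h0]; simpa using hN
    have h1 : ∑ c ∈ Gj j, 2 * J * P.card * (V j).card <
        ∑ c ∈ Gj j, N * (V j ∩ P.image fun p => p.1 * c + p.2).card :=
      Finset.sum_lt_sum_of_nonempty h0 fun c hc => (Finset.mem_filter.1 hc).2
    rw [Finset.sum_const, smul_eq_mul, ← Finset.mul_sum] at h1
    have h2 := Nat.mul_le_mul_left N (hsum j (Gj j) (Finset.filter_subset _ _))
    by_contra h3
    push Not at h3
    have h4 := Nat.mul_le_mul_right (P.card * (V j).card) h3
    have h5 : (Gj j).card * (2 * J * P.card * (V j).card) =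
      2 * J * (Gj j).card * (P.card * (V j).card) := by ring
    omega
  have hcov : G ⊆ (Finset.range J).biUnion Gj := by
    intro c hc
    obtain ⟨j, hj, h1⟩ := hbad c hc
    exact Finset.mem_biUnion.2 ⟨j, Finset.mem_range.2 hj, Finset.mem_filter.2 ⟨hc, h1⟩⟩
  have hc1 : G.card ≤ ∑ j ∈ Finset.range J, (Gj j).card :=
    (Finset.card_le_card hcov).trans Finset.card_biUnion_le
  have hJ : J ≠ 0 := by
    rintro rfl
    simp at hc1
    simp [hc1] at hGc
    omega
  have hc2 : ∑ j ∈ Finset.range J, 2 * J * (Gj j).card < ∑ j ∈ Finset.range J, N :=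
    Finset.sum_lt_sum_of_nonempty (by simpa using hJ) fun j _ => hGj j
  rw [← Finset.mul_sum, Finset.sum_const, Finset.card_range, smul_eq_mul] at hc2
  have h6 : J * N ≤ J * (2 * G.card) := Nat.mul_le_mul_left J hGc
  have h7 := Nat.mul_le_mul_left (2 * J) hc1
  have h8 : J * (2 * G.card) = 2 * J * G.card := by ring
  omega

/-! ### Constants, invariant and numerical estimates -/

/-- The exponent `δ = (h-1)/J`, chosen so that `h - J δ = 1`. -/
noncomputable def dlt (h J : ℕ) : ℝ := ((h : ℝ) - 1) / J
/-- The constant `C`: with `#A + 1 ≤ 2τ` there are at most `C τ^(h-1)` affine forms, and at most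
`C τ^(h-jδ)` integers hit more than `j` times are allowed. -/
def Cst (h : ℕ) : ℕ := (h + 1) ^ 2 * 2 ^ (h - 1)
/-- The constant `M`: the parameter `c` ranges over `0 ≤ c < M τ^(h+δ)`. -/
def Mst (h J : ℕ) : ℕ := 2 * J * Cst h + 2 * (Cst h * (Cst h + 1) + 4)
/-- A factor such that an integer with `H` hits has at most `D^l H + 1` representations of order `l`,
where for `l = h` the integers of the protected set `F` are excepted. -/
def Dst (h J : ℕ) : ℕ := (h + 1) ^ 2 * (J + 2)
/-- The threshold `g`, a bound for the number of representations of order `h` of an integer that was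
never a target. -/
def gst (h J : ℕ) : ℕ := Dst h J ^ h * (J + 1) + 1

/-- The invariant after `t` steps. `A` is the current set, `F` consists of the integers protected from
hits (those where `f` is below `g`, and the previous targets), and `H n` counts the steps in which
`n` was hit. The finite set `V j` consists of the integers hit more than `j` times. -/
structure StInv (h J t₀ : ℕ) (f : ℤ → ℕ∞) (t : ℕ) (A F : Finset ℤ) (H : ℤ → ℕ) : Prop where
  cardA : A.card ≤ 2 * t
  cardF : F.card + 1 ≤ t + t₀
  le : ∀ n, H n ≤ J + 1
  lev : ∃ V : ℕ → Finset ℤ, (∀ j n, n ∈ V j ↔ j + 1 ≤ H n) ∧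
    ∀ j ≤ J, ((V j).card : ℝ) ≤ Cst h * ((t + t₀ : ℕ) : ℝ) ^ ((h : ℝ) - j * dlt h J)
  rep : ∀ l ≤ h, ∀ n, (l < h ∨ n ∉ F) →
    (MS A l n).encard ≤ ((Dst h J ^ l * H n + 1 : ℕ) : ℕ∞)
  repf : ∀ n, (MS A h n).encard ≤ f n
  hf : ∀ n, n ∉ F → (gst h J : ℕ∞) ≤ f n

/-- There are at most `C τ^(h-1)` forms, and the forbidden values exclude at most half of the range of
`c`. -/
lemma numeric_bad {h τ a p b e N M : ℕ} (hh : 2 ≤ h) (ha : a + 1 ≤ 2 * τ)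
    (hp : p ≤ (h + 1) ^ 2 * (a + 1) ^ (h - 1)) (hb : b ≤ (Cst h + 1) * τ)
    (he : e ≤ 4 * τ) (hN : M * τ ^ h ≤ N)
    (hM : 2 * (Cst h * (Cst h + 1) + 4) ≤ M) :
    p ≤ Cst h * τ ^ (h - 1) ∧ 2 * (p * b + e) ≤ N := by
  have h1 : p ≤ Cst h * τ ^ (h - 1) := by
    refine hp.trans ?_
    rw [Cst, mul_assoc, ← mul_pow]
    gcongr
  refine ⟨h1, ?_⟩
  have h2 : τ ^ h = τ ^ (h - 1) * τ := by
    rw [← pow_succ]; congr 1; omega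
  have h3 : τ ≤ τ ^ h := Nat.le_self_pow (by omega) _
  calc 2 * (p * b + e) ≤ 2 * (Cst h * τ ^ (h - 1) * ((Cst h + 1) * τ) + 4 * τ ^ h) := by
        gcongr; exact he.trans (by gcongr)
    _ = 2 * (Cst h * (Cst h + 1) + 4) * τ ^ h := by rw [h2]; ring
    _ ≤ M * τ ^ h := by gcongr
    _ ≤ N := hN

/-- Increments of size `C τ^(q-1)` add up to at most `C τ^q`, for any `q ≥ 1`. -/
lemma numeric_grow {τ : ℕ} (hτ : 1 ≤ τ) {q : ℝ} (hq : 1 ≤ q) {C x y : ℝ} (hC : 0 ≤ C)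
    (hx : x ≤ C * (τ : ℝ) ^ q) (hy : y ≤ C * (τ : ℝ) ^ (q - 1)) :
    x + y ≤ C * ((τ + 1 : ℕ) : ℝ) ^ q := by
  have hτ0 : (0 : ℝ) < τ := by exact_mod_cast hτ
  have h1 : (τ : ℝ) ^ q = τ ^ (q - 1) * τ := by
    rw [← Real.rpow_add_one hτ0.ne']; congr 1; ring
  have h2 : ((τ + 1 : ℕ) : ℝ) ^ q = ((τ + 1 : ℕ) : ℝ) ^ (q - 1) * (τ + 1 : ℕ) := by
    rw [← Real.rpow_add_one (by positivity)]; congr 1; ring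
  have h3 : (τ : ℝ) ^ (q - 1) ≤ ((τ + 1 : ℕ) : ℝ) ^ (q - 1) :=
    Real.rpow_le_rpow hτ0.le (by push_cast; linarith) (by linarith)
  calc x + y ≤ C * ((τ : ℝ) ^ (q - 1) * (τ + 1)) := by rw [h1] at hx; linarith
    _ ≤ _ := by rw [h2]; push_cast at h3 ⊢; gcongr

/-- The bound for level `j` and the averaging estimate bound the increment of level `j + 1`. -/
lemma numeric_level {h J τ p N a b j : ℕ} (hh : 2 ≤ h) (hτ : 1 ≤ τ)
    (hp : p ≤ Cst h * τ ^ (h - 1)) (hN : Mst h J * (τ : ℝ) ^ ((h : ℝ) + dlt h J) ≤ N)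
    (hab : N * a ≤ 2 * J * p * b)
    (hb : (b : ℝ) ≤ Cst h * (τ : ℝ) ^ ((h : ℝ) - j * dlt h J)) :
    (a : ℝ) ≤ Cst h * (τ : ℝ) ^ ((h : ℝ) - (j + 1 : ℕ) * dlt h J - 1) := by
  have hτ0 : (0 : ℝ) < τ := by exact_mod_cast hτ
  set X := (τ : ℝ) ^ ((h : ℝ) + dlt h J) with hX
  set Y := (τ : ℝ) ^ ((h : ℝ) - (j + 1 : ℕ) * dlt h J - 1) with hY
  have hXY : (τ : ℝ) ^ (h - 1) * (τ : ℝ) ^ ((h : ℝ) - j * dlt h J) = X * Y := by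
    rw [← Real.rpow_natCast, ← Real.rpow_add hτ0, hX, hY, ← Real.rpow_add hτ0,
      Nat.cast_sub (by omega)]
    congr 1; push_cast; ring
  have hX0 : 0 < X := Real.rpow_pos_of_pos hτ0 _
  have hY0 : 0 < Y := Real.rpow_pos_of_pos hτ0 _
  have hM0 : (0 : ℝ) < Mst h J := by
    have : 0 < Mst h J := by unfold Mst; omega
    exact_mod_cast this
  have hM1 : (2 * J * Cst h : ℝ) ≤ Mst h J := by
    have : 2 * J * Cst h ≤ Mst h J := by unfold Mst; omega
    exact_mod_cast this
  have hp' : (p : ℝ) ≤ Cst h * (τ : ℝ) ^ (h - 1) := by exact_mod_cast hp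
  have hab' : (N : ℝ) * a ≤ 2 * J * p * b := by exact_mod_cast hab
  have h1 : (Mst h J * X) * a ≤ (Mst h J * X) * (Cst h * Y) := by
    calc (Mst h J * X) * a ≤ N * a := by gcongr
      _ ≤ 2 * J * p * b := hab'
      _ ≤ 2 * J * (Cst h * (τ : ℝ) ^ (h - 1)) *
          (Cst h * (τ : ℝ) ^ ((h : ℝ) - j * dlt h J)) := by gcongr
      _ = (2 * J * Cst h) * (Cst h * (X * Y)) := by rw [← hXY]; ring
      _ ≤ Mst h J * (Cst h * (X * Y)) := by gcongr
      _ = _ := by ring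
  exact le_of_mul_le_mul_left h1 (by positivity)

lemma dlt_mul_le {h J j : ℕ} (hh : 2 ≤ h) (hJ : 1 ≤ J) (hj : j ≤ J) :
    1 ≤ (h : ℝ) - j * dlt h J := by
  have hJ0 : (0 : ℝ) < J := by exact_mod_cast hJ
  have hh' : (2 : ℝ) ≤ h := by exact_mod_cast hh
  have hj' : (j : ℝ) ≤ J := by exact_mod_cast hj
  have h1 : J * dlt h J = (h : ℝ) - 1 := by unfold dlt; field_simp
  have h0 : 0 ≤ dlt h J := div_nonneg (by linarith) hJ0.le
  nlinarith

/-- One more hit pays for the new representations it creates. -/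
lemma numeric_rep {h J l H : ℕ} (hl : 1 ≤ l) :
    (Dst h J ^ l * H + 1) + (h + 1) ^ 2 * (Dst h J ^ (l - 1) * (J + 1) + 1) ≤
      Dst h J ^ l * (H + 1) + 1 := by
  have h0 : 1 ≤ Dst h J ^ (l - 1) := Nat.one_le_pow _ _ (by unfold Dst; positivity)
  have h1 : Dst h J ^ l = Dst h J ^ (l - 1) * ((h + 1) ^ 2 * (J + 2)) := by
    conv_rhs => rw [show (h + 1) ^ 2 * (J + 2) = Dst h J from rfl]
    rw [← pow_succ]; congr 1; omega
  have h2 : (h + 1) ^ 2 * (Dst h J ^ (l - 1) * (J + 1) + 1) ≤ Dst h J ^ l := by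
    calc _ ≤ (h + 1) ^ 2 * (Dst h J ^ (l - 1) * (J + 1) + Dst h J ^ (l - 1)) := by gcongr
      _ = _ := by rw [h1]; ring
  rw [mul_add (Dst h J ^ l)]; omega

/-! ### One step of the construction -/

/-- Given a target `v` with too few representations, two elements can be adjoined so that `v` gains a
representation and the invariant persists. -/
lemma step {h J t₀ t : ℕ} {f : ℤ → ℕ∞} {A F : Finset ℤ} {H : ℤ → ℕ} (hh : 2 ≤ h) (hJ : 1 ≤ J)
    (ht₀ : 1 ≤ t₀) (I : StInv h J t₀ f t A F H) (v : ℤ) (hv : (MS A h v).encard < f v) :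
    ∃ c : ℤ, ∃ A' F' : Finset ℤ, ∃ H' : ℤ → ℕ, StInv h J t₀ f (t + 1) A' F' H' ∧ A ⊆ A' ∧
      -c ∈ A' ∧ -c ∉ A ∧ 0 ≤ c ∧
      (c : ℝ) < Mst h J * ((t + t₀ : ℕ) : ℝ) ^ ((h : ℝ) + dlt h J) ∧
      (MS A h v).encard + 1 ≤ (MS A' h v).encard := by
  classical
  obtain ⟨V, hV, hVc⟩ := I.lev
  set τ := t + t₀ with hτdef
  have hτ : 1 ≤ τ := by omega
  have hτ1 : (1 : ℝ) ≤ τ := by exact_mod_cast hτ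
  have hτ0 : (0 : ℝ) < τ := by linarith
  have hh' : (2 : ℝ) ≤ h := by exact_mod_cast hh
  have hd0 : 0 ≤ dlt h J := div_nonneg (by linarith) (by positivity)
  set P := forms A v h with hPdef
  have hP : ∀ p ∈ P, p.1 ≠ 0 := fun p hp => (Finset.mem_filter.1 hp).2
  set N := ⌈Mst h J * (τ : ℝ) ^ ((h : ℝ) + dlt h J)⌉₊ with hNdef
  have hN1 : Mst h J * (τ : ℝ) ^ ((h : ℝ) + dlt h J) ≤ N := Nat.le_ceil _
  have hN2 : Mst h J * τ ^ h ≤ N := by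
    have h1 : (τ : ℝ) ^ h ≤ (τ : ℝ) ^ ((h : ℝ) + dlt h J) := by
      rw [← Real.rpow_natCast]
      exact Real.rpow_le_rpow_of_exponent_le hτ1 (by linarith)
    have h2 : (Mst h J : ℝ) * (τ : ℝ) ^ h ≤ N := le_trans (by gcongr) hN1
    exact_mod_cast h2
  set B := insert v F ∪ V J with hBdef
  set E := A.image (fun a => -a) ∪ A.image (fun a => (a - v) / ((h : ℤ) - 1)) ∪ {(-v) / (h : ℤ)}
    with hEdef
  have hVJ : (V J).card ≤ Cst h * τ := by
    have h1 := hVc J le_rfl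
    have h2 : (h : ℝ) - J * dlt h J = 1 := by
      have : (J : ℝ) ≠ 0 := by positivity
      unfold dlt; field_simp; ring
    rw [h2, Real.rpow_one] at h1
    exact_mod_cast h1
  have hBc : B.card ≤ (Cst h + 1) * τ := by
    have h1 : B.card ≤ _ := Finset.card_union_le (insert v F) (V J)
    have h2 := Finset.card_insert_le v F
    have h3 := I.cardF
    rw [add_mul, one_mul]; omega
  have hEc : E.card ≤ 4 * τ := by
    have h1 : E.card ≤ _ := Finset.card_union_le (A.image (fun a => -a) ∪
      A.image (fun a => (a - v) / ((h : ℤ) - 1))) {(-v) / (h : ℤ)}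
    have h2 := Finset.card_union_le (A.image (fun a => -a))
      (A.image (fun a => (a - v) / ((h : ℤ) - 1)))
    have h3 := Finset.card_image_le (s := A) (f := fun a => -a)
    have h4 := Finset.card_image_le (s := A) (f := fun a => (a - v) / ((h : ℤ) - 1))
    have h5 := I.cardA
    rw [Finset.card_singleton] at h1
    omega
  have hAc := I.cardA
  obtain ⟨hPc, hbad⟩ := numeric_bad hh (by omega : A.card + 1 ≤ 2 * τ) (card_forms_le A v h)
    hBc hEc hN2 (by unfold Mst; omega)
  have hN0 : 0 < N := by
    refine lt_of_lt_of_le ?_ hN2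
    have : 0 < Mst h J := by unfold Mst; omega
    positivity
  obtain ⟨c, hc0, hcN, hcE, hcB, hcV⟩ := select P hP N hN0 B E hbad J V
  -- The set `E` guarantees that the two new elements are distinct and do not lie in `A`.
  have hx : -c ∉ A := fun hcon => hcE (by
    simp only [hEdef, Finset.mem_union, Finset.mem_image]
    exact Or.inl (Or.inl ⟨_, hcon, by simp⟩))
  have hhz : ((h : ℤ) - 1) ≠ 0 := by omega
  have hy : v + ((h : ℤ) - 1) * c ∉ A := fun hcon => hcE (by
    simp only [hEdef, Finset.mem_union, Finset.mem_image]
    exact Or.inl (Or.inr ⟨_, hcon, by simp [hhz]⟩))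
  have hxy : -c ≠ v + ((h : ℤ) - 1) * c := fun hcon => hcE (by
    simp only [hEdef, Finset.mem_union, Finset.mem_singleton]
    right
    have : -v = h * c := by linarith
    rw [this, Int.mul_ediv_cancel_left _ (by omega)])
  set T := hits A v h c with hTdef
  have hTB : ∀ u ∈ T, u ∉ B := by
    intro u hu
    obtain ⟨p, hp, rfl⟩ := Finset.mem_image.1 hu
    exact hcB p hp
  set A' : Finset ℤ := insert (-c) (insert (v + ((h : ℤ) - 1) * c) A) with hA'
  have hA'c : (A' : Set ℤ) = ↑A ∪ {-c, v + ((h : ℤ) - 1) * c} := by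
    ext a; simp [hA']
  have hsub : (A : Set ℤ) ⊆ A' := by rw [hA'c]; exact subset_union_left
  have hkeep : ∀ l ≤ h, ∀ u, u ∉ T → (l < h ∨ u ≠ v) → (MS A' l u).encard ≤ (MS A l u).encard := by
    intro l hl u hu hlu
    refine Set.encard_le_encard fun s hs => ?_
    rw [hA'c] at hs
    rcases MS_step hh hl hxy hs with h1 | h1 | ⟨h1, h2, -⟩
    · exact h1
    · exact absurd h1 hu
    · rcases hlu with h3 | h3
      · omega
      · exact absurd h2 h3
  have hvT : v ∉ T := fun hcon => hTB v hcon (by simp [hBdef])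
  have hvle : (MS A' h v).encard ≤ (MS A h v).encard + 1 := by
    refine (Set.encard_le_encard (t := MS A h v ∪
      {Multiset.replicate (h - 1) (-c) + {v + ((h : ℤ) - 1) * c}}) fun s hs => ?_).trans
      ((Set.encard_union_le _ _).trans (by simp))
    rw [hA'c] at hs
    rcases MS_step hh le_rfl hxy hs with h1 | h1 | ⟨-, -, h1⟩
    · exact Or.inl h1
    · exact absurd h1 hvT
    · exact Or.inr h1
  have hvge : (MS A h v).encard + 1 ≤ (MS A' h v).encard := by
    have hnew : Multiset.replicate (h - 1) (-c) + {v + ((h : ℤ) - 1) * c} ∉ MS A h v :=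
      fun hcon => hy (hcon.2.1 _ (by simp))
    rw [← Set.encard_insert_of_notMem hnew]
    refine Set.encard_le_encard (insert_subset ⟨?_, ?_, ?_⟩ (MS_mono hsub _ _))
    · simp; omega
    · intro a ha
      rw [Multiset.mem_add, Multiset.mem_singleton] at ha
      rcases ha with ha | rfl
      · rw [Multiset.eq_of_mem_replicate ha]; simp [hA']
      · simp [hA']
    · simp only [Multiset.sum_add, Multiset.sum_replicate, nsmul_eq_mul, Multiset.sum_singleton]
      push_cast [Nat.cast_sub (show 1 ≤ h by omega)]
      ring
  let H' : ℤ → ℕ := fun n => H n + if n ∈ T then 1 else 0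
  have hH'1 : ∀ n ∈ T, H' n = H n + 1 := fun n hn => by simp [H', hn]
  have hH'2 : ∀ n, n ∉ T → H' n = H n := fun n hn => by simp [H', hn]
  have hle : ∀ n, H' n ≤ J + 1 := by
    intro n
    by_cases hn : n ∈ T
    · rw [hH'1 n hn]
      have h1 : n ∉ V J := fun hcon => hTB n hn (by simp [hBdef, hcon])
      rw [hV] at h1
      omega
    · rw [hH'2 n hn]; exact I.le n
  have hrep : ∀ l ≤ h, ∀ n, (l < h ∨ n ∉ insert v F) →
      (MS A' l n).encard ≤ ((Dst h J ^ l * H' n + 1 : ℕ) : ℕ∞) := by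
    intro l hl n hln
    have hold : (MS A l n).encard ≤ ((Dst h J ^ l * H n + 1 : ℕ) : ℕ∞) :=
      I.rep l hl n (hln.imp_right fun h1 h2 => h1 (Finset.mem_insert_of_mem h2))
    by_cases hn : n ∈ T
    · rw [hH'1 n hn]
      rcases Nat.eq_zero_or_pos l with rfl | hl0
      · have h1 : (MS (A' : Set ℤ) 0 n).encard ≤ 1 := by
          refine Set.encard_le_one_iff.2 fun a b ha hb => ?_
          rw [Multiset.card_eq_zero.1 ha.1, Multiset.card_eq_zero.1 hb.1]
        exact h1.trans (by exact_mod_cast (by omega))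
      · have h1 := encard_MS_step_le (A := (A : Set ℤ)) hxy hl n
          ((Dst h J ^ (l - 1) * (J + 1) + 1 : ℕ) : ℕ∞) (by
            intro k hk m
            refine (I.rep k (by omega) m (Or.inl (by omega))).trans ?_
            have h2 : Dst h J ^ k ≤ Dst h J ^ (l - 1) :=
              Nat.pow_le_pow_right (by unfold Dst; positivity) (by omega)
            have h3 := Nat.mul_le_mul h2 (I.le m)
            exact_mod_cast (by omega))
        rw [← hA'c] at h1
        refine h1.trans ((add_le_add_left hold _).trans ?_)
        exact_mod_cast numeric_rep hl0
    · rw [hH'2 n hn]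
      refine (hkeep l hl n hn (hln.imp_right fun h1 h2 => h1 (by simp [h2]))).trans hold
  have hf' : ∀ n, n ∉ insert v F → (gst h J : ℕ∞) ≤ f n :=
    fun n hn => I.hf n fun h2 => hn (Finset.mem_insert_of_mem h2)
  refine ⟨c, A', insert v F, H', ⟨?_, ?_, hle, ?_, hrep, ?_, hf'⟩, ?_, ?_, hx, hc0, ?_, hvge⟩
  · have h1 : A'.card ≤ _ := Finset.card_insert_le (-c) (insert (v + ((h : ℤ) - 1) * c) A)
    have h2 := Finset.card_insert_le (v + ((h : ℤ) - 1) * c) A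
    omega
  · have h1 := Finset.card_insert_le v F
    have h2 := I.cardF
    omega
  · let V' : ℕ → Finset ℤ := fun j => match j with
      | 0 => V 0 ∪ T
      | j + 1 => V (j + 1) ∪ (V j ∩ T)
    refine ⟨V', ?_, ?_⟩
    · intro j n
      rcases j with _ | j
      · simp only [V', Finset.mem_union, hV, H']
        split_ifs with hn <;> simp [hn]
      · simp only [V', Finset.mem_union, Finset.mem_inter, hV, H']
        split_ifs with hn <;> simp [hn]
        omega
    · have hsucc : t + 1 + t₀ = τ + 1 := by omega
      rw [hsucc]
      intro j hj
      rcases j with _ | j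
      · have h1 : ((V' 0).card : ℝ) ≤ (V 0).card + T.card := by
          exact_mod_cast Finset.card_union_le _ _
        refine h1.trans (numeric_grow hτ (dlt_mul_le hh hJ hj) (Nat.cast_nonneg _) (hVc 0 hj) ?_)
        have h2 : T.card ≤ Cst h * τ ^ (h - 1) := Finset.card_image_le.trans hPc
        have h3 : (τ : ℝ) ^ ((h : ℝ) - (0 : ℕ) * dlt h J - 1) = (τ : ℝ) ^ (h - 1) := by
          rw [← Real.rpow_natCast, Nat.cast_sub (by omega)]; simp
        rw [h3]
        exact_mod_cast h2
      · have h1 : ((V' (j + 1)).card : ℝ) ≤ (V (j + 1)).card + (V j ∩ T).card := by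
          exact_mod_cast Finset.card_union_le _ _
        refine h1.trans (numeric_grow hτ (dlt_mul_le hh hJ hj) (Nat.cast_nonneg _)
          (hVc (j + 1) hj) ?_)
        exact numeric_level hh hτ hPc hN1 (hcV j (by omega)) (hVc j (by omega))
  · intro n
    by_cases hnv : n = v
    · subst hnv
      exact hvle.trans (Order.add_one_le_of_lt hv)
    by_cases hnF : n ∈ F
    · refine (hkeep h le_rfl n ?_ (Or.inr hnv)).trans (I.repf n)
      exact fun hn => hTB n hn (by simp [hBdef, hnF])
    · have h1 : n ∉ insert v F := by simp [hnv, hnF]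
      refine (hrep h le_rfl n (Or.inr h1)).trans (le_trans ?_ (hf' n h1))
      have h2 := Nat.mul_le_mul_left (Dst h J ^ h) (hle n)
      unfold gst
      exact_mod_cast (by omega)
  · exact fun a ha => by simp [hA', ha]
  · simp [hA']
  · have h1 : c.toNat < N := by omega
    rw [hNdef, Nat.lt_ceil] at h1
    have h2 : ((c.toNat : ℤ) : ℝ) = c := by rw [Int.toNat_of_nonneg hc0]
    rw [← h2]; exact_mod_cast h1

/-! ### The infinite construction and its density -/

/-- There is always a possible target: an integer outside `F` that was never hit has at most one
representation, while `f` is at least `g ≥ 2` there. -/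
lemma exists_unsat {h J t₀ t : ℕ} {f : ℤ → ℕ∞} {A F : Finset ℤ} {H : ℤ → ℕ}
    (I : StInv h J t₀ f t A F H) : ∃ v, (MS A h v).encard < f v := by
  obtain ⟨V, hV, -⟩ := I.lev
  obtain ⟨v, hv⟩ := Infinite.exists_notMem_finset (F ∪ V 0)
  simp only [Finset.mem_union, hV, not_or] at hv
  refine ⟨v, (I.rep h le_rfl v (Or.inr hv.1)).trans_lt (lt_of_lt_of_le ?_ (I.hf v hv.1))⟩
  have h0 : H v = 0 := by omega
  have h1 : 0 < Dst h J ^ h := by unfold Dst; positivity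
  have h2 : 0 < Dst h J ^ h * (J + 1) := by positivity
  rw [h0]
  unfold gst
  exact_mod_cast (by omega)

/-- The iterated construction along a schedule `σ`. If the scheduled integer already has the required
number of representations, another target is served, so that every step contributes an element
`-c t` to the density. -/
lemma exists_seq {h J : ℕ} (hh : 2 ≤ h) (hJ : 1 ≤ J) (f : ℤ → ℕ∞)
    (hf : {n | ¬ (gst h J : ℕ∞) ≤ f n}.Finite) (σ : ℕ → ℤ) :
    ∃ t₀ : ℕ, ∃ A : ℕ → Finset ℤ, ∃ c : ℕ → ℤ, Monotone A ∧
      (∀ t, -c t ∈ A (t + 1) ∧ -c t ∉ A t ∧ 0 ≤ c t ∧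
        (c t : ℝ) < Mst h J * ((t + t₀ : ℕ) : ℝ) ^ ((h : ℝ) + dlt h J)) ∧
      (∀ t n, (MS (A t) h n).encard ≤ f n) ∧
      ∀ t, (MS (A t) h (σ t)).encard < f (σ t) →
        (MS (A t) h (σ t)).encard + 1 ≤ (MS (A (t + 1)) h (σ t)).encard := by
  classical
  set t₀ := hf.toFinset.card + 1 with ht₀
  let S : ℕ → Type := fun t => {s : Finset ℤ × Finset ℤ × (ℤ → ℕ) //
    StInv h J t₀ f t s.1 s.2.1 s.2.2}
  have hempty : ∀ l, 0 < l → ∀ n, (MS ((∅ : Finset ℤ) : Set ℤ) l n) = ∅ := by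
    intro l hl n
    refine Set.eq_empty_iff_forall_notMem.2 fun s hs => ?_
    obtain ⟨a, ha⟩ := Multiset.card_pos_iff_exists_mem.1 (hs.1.symm ▸ hl)
    simpa using hs.2.1 a ha
  have init : StInv h J t₀ f 0 ∅ hf.toFinset (fun _ => 0) := by
    refine ⟨by simp, by omega, by simp, ⟨fun _ => ∅, by simp, ?_⟩, ?_, ?_, ?_⟩
    · intro j _
      rw [Finset.card_empty, Nat.cast_zero]
      positivity
    · intro l _ n _
      rcases Nat.eq_zero_or_pos l with rfl | hl0
      · rw [Nat.mul_zero, Nat.zero_add, Nat.cast_one]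
        refine Set.encard_le_one_iff.2 fun a b ha hb => ?_
        rw [Multiset.card_eq_zero.1 ha.1, Multiset.card_eq_zero.1 hb.1]
      · rw [hempty l hl0]; simp
    · intro n; rw [hempty h (by omega)]; simp
    · intro n hn; simpa using hn
  have hstep : ∀ t, ∀ s : S t, ∃ s' : S (t + 1), ∃ c : ℤ, s.1.1 ⊆ s'.1.1 ∧
      -c ∈ s'.1.1 ∧ -c ∉ s.1.1 ∧ 0 ≤ c ∧
      (c : ℝ) < Mst h J * ((t + t₀ : ℕ) : ℝ) ^ ((h : ℝ) + dlt h J) ∧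
      ((MS s.1.1 h (σ t)).encard < f (σ t) →
        (MS s.1.1 h (σ t)).encard + 1 ≤ (MS s'.1.1 h (σ t)).encard) := by
    rintro t ⟨⟨A, F, H⟩, I⟩
    by_cases hσ : (MS A h (σ t)).encard < f (σ t)
    · obtain ⟨c, A', F', H', I', h1, h2, h3, h4, h5, h6⟩ := step hh hJ (by omega) I (σ t) hσ
      exact ⟨⟨⟨A', F', H'⟩, I'⟩, c, h1, h2, h3, h4, h5, fun _ => h6⟩
    · obtain ⟨v, hv⟩ := exists_unsat I
      obtain ⟨c, A', F', H', I', h1, h2, h3, h4, h5, h6⟩ := step hh hJ (by omega) I v hv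
      exact ⟨⟨⟨A', F', H'⟩, I'⟩, c, h1, h2, h3, h4, h5, fun h7 => absurd h7 hσ⟩
  choose nxt c hn1 hn2 hn3 hn4 hn5 hn6 using hstep
  let seq : ∀ t, S t := fun t => Nat.rec ⟨⟨∅, hf.toFinset, fun _ => 0⟩, init⟩ nxt t
  have hseq : ∀ t, seq (t + 1) = nxt t (seq t) := fun t => rfl
  refine ⟨t₀, fun t => (seq t).1.1, fun t => c t (seq t), ?_, ?_, ?_, ?_⟩
  · exact monotone_nat_of_le_succ fun t => hn1 t (seq t)
  · exact fun t => ⟨hn2 t _, hn3 t _, hn4 t _, hn5 t _⟩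
  · exact fun t n => (seq t).2.repf n
  · exact fun t => hn6 t _

/-- Distinct elements `-c t` with `0 ≤ c t < M (t + t₀)^β` force `A(x) ≫ x^(1/β)`. -/
lemma density {A : ℕ → Finset ℤ} {c : ℕ → ℤ} {t₀ : ℕ} {M β : ℝ} (hM : 0 < M) (hβ : 0 < β)
    (hA : Monotone A) (hc : ∀ t, -c t ∈ A (t + 1) ∧ -c t ∉ A t ∧ 0 ≤ c t ∧
        (c t : ℝ) < M * ((t + t₀ : ℕ) : ℝ) ^ β) {γ : ℝ} (hγ : γ ≤ 1 / β) :
    ∃ C : ℝ, 0 < C ∧ ∀ᶠ x in atTop, C * x ^ γ ≤ (countAbs (⋃ t, (A t : Set ℤ)) x : ℝ) := by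
  refine ⟨(1 / M) ^ (1 / β) / 2, by positivity, ?_⟩
  have htend : Tendsto (fun x : ℝ => (1 / M) ^ (1 / β) * x ^ (1 / β)) atTop atTop :=
    (tendsto_rpow_atTop (by positivity)).const_mul_atTop (by positivity)
  filter_upwards [eventually_ge_atTop 1, htend.eventually_ge_atTop (2 * (t₀ + 1))] with x hx1 hx2
  have hx0 : (0 : ℝ) < x := by linarith
  set y := (1 / M) ^ (1 / β) * x ^ (1 / β) with hy
  have hyβ : M * y ^ β = x := by
    rw [hy, ← Real.mul_rpow (by positivity) hx0.le, ← Real.rpow_mul (by positivity),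
      one_div_mul_cancel hβ.ne', Real.rpow_one]
    field_simp
  have hy0 : 0 ≤ y := by positivity
  have hxγ : x ^ γ ≤ x ^ (1 / β) := Real.rpow_le_rpow_of_exponent_le hx1 hγ
  have hinj : Function.Injective fun t => -c t := by
    have key : ∀ s t, s < t → -c s ≠ -c t := by
      intro s t hst heq
      exact (hc t).2.1 (heq ▸ hA (Nat.succ_le_of_lt hst) (hc s).1)
    intro s t hst
    by_contra hne
    rcases lt_or_gt_of_ne hne with h1 | h1
    · exact key s t h1 hst
    · exact key t s h1 hst.symm
  -- All steps `t < T` produce elements of absolute value at most `M y ^ β = x`.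
  set T := ⌊y⌋₊ - t₀ with hT
  have hfin : {a : ℤ | a ∈ (⋃ t, (A t : Set ℤ)) ∧ |(a : ℝ)| ≤ x}.Finite := by
    refine (Set.finite_Icc (-⌊x⌋) ⌊x⌋).subset fun a ha => ?_
    have h1 := abs_le.1 ha.2
    refine ⟨?_, Int.le_floor.2 h1.2⟩
    have : -a ≤ ⌊x⌋ := Int.le_floor.2 (by push_cast; linarith)
    linarith
  have hcard : T ≤ countAbs (⋃ t, (A t : Set ℤ)) x := by
    have h1 : (((Finset.range T).image fun t => -c t : Finset ℤ) : Set ℤ).ncard = T := by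
      rw [Set.ncard_coe_finset, Finset.card_image_of_injective _ hinj, Finset.card_range]
    unfold countAbs
    conv_lhs => rw [← h1]
    refine Set.ncard_le_ncard ?_ hfin
    intro a ha
    rw [Finset.mem_coe, Finset.mem_image] at ha
    obtain ⟨t, ht, rfl⟩ := ha
    rw [Finset.mem_range] at ht
    refine ⟨mem_iUnion.2 ⟨t + 1, (hc t).1⟩, ?_⟩
    have h2 : (0 : ℝ) ≤ c t := by exact_mod_cast (hc t).2.2.1
    push_cast
    rw [abs_neg, abs_of_nonneg h2]
    have h3 : ((t + t₀ : ℕ) : ℝ) ≤ y :=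
      le_trans (by exact_mod_cast (by omega : t + t₀ ≤ ⌊y⌋₊)) (Nat.floor_le hy0)
    refine (hc t).2.2.2.le.trans ?_
    rw [← hyβ]
    gcongr
  have h4 : y ≤ T + t₀ + 1 := by
    have h5 := (Nat.lt_floor_add_one y).le
    have h6 : ⌊y⌋₊ ≤ T + t₀ := by omega
    have h7 : (⌊y⌋₊ : ℝ) ≤ T + t₀ := by exact_mod_cast h6
    linarith
  have h8 : (T : ℝ) ≤ countAbs (⋃ t, (A t : Set ℤ)) x := by exact_mod_cast hcard
  have h9 : (1 / M) ^ (1 / β) / 2 * x ^ γ ≤ y / 2 := by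
    rw [hy, div_mul_eq_mul_div]
    gcongr
  linarith

theorem stmt_2 (h : ℕ) (hh : 2 ≤ h) (ε : ℝ) (hε : 0 < ε) :
    ∃ g : ℕ, 0 < g ∧
      ∀ f : ℤ → ℕ∞, (g : ℕ∞) ≤ Filter.liminf f Filter.cofinite →
        ∃ A : Set ℤ, (∀ n : ℤ, repFn A h n = f n) ∧
          ∃ C : ℝ, 0 < C ∧
            ∀ᶠ x in Filter.atTop, C * x ^ ((1 : ℝ) / h - ε) ≤ (countAbs A x : ℝ) := by
  set J := ⌈((h : ℝ) - 1) / ε⌉₊ + 1 with hJdef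
  have hJ : 1 ≤ J := by omega
  have hJ0 : (0 : ℝ) < J := by exact_mod_cast hJ
  have hh' : (2 : ℝ) ≤ h := by exact_mod_cast hh
  have hd0 : 0 ≤ dlt h J := div_nonneg (by linarith) hJ0.le
  have hdε : dlt h J ≤ ε := by
    have h1 : ((h : ℝ) - 1) / ε ≤ J := by
      rw [hJdef]; push_cast
      linarith [Nat.le_ceil (((h : ℝ) - 1) / ε)]
    rw [div_le_iff₀ hε] at h1
    rw [dlt, div_le_iff₀ hJ0]
    linarith
  refine ⟨gst h J, by unfold gst; omega, fun f hf => ?_⟩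
  have hfin : {n | ¬ (gst h J : ℕ∞) ≤ f n}.Finite := by
    have hlt : ((Dst h J ^ h * (J + 1) : ℕ) : ℕ∞) < liminf f cofinite := by
      refine lt_of_lt_of_le ?_ hf
      unfold gst
      exact_mod_cast Nat.lt_succ_self _
    have h1 := eventually_lt_of_lt_liminf hlt
    rw [eventually_cofinite] at h1
    refine h1.subset fun n hn hcon => hn ?_
    have h2 := Order.add_one_le_of_lt hcon
    unfold gst
    exact_mod_cast h2
  -- The schedule takes every integer value infinitely often, which also handles `f n = ⊤`.
  let σ : ℕ → ℤ := fun t => Denumerable.ofNat ℤ t.unpair.1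
  have hσ : ∀ n : ℤ, ∀ t, ∃ s, t ≤ s ∧ σ s = n := by
    intro n t
    refine ⟨Nat.pair (Encodable.encode n) t, Nat.right_le_pair _ _, ?_⟩
    change Denumerable.ofNat ℤ (Nat.pair (Encodable.encode n) t).unpair.1 = n
    rw [Nat.unpair_pair]
    exact Denumerable.ofNat_encode n
  obtain ⟨t₀, A, c, hA, hc, hle, hinc⟩ := exists_seq hh hJ f hfin σ
  have hAm : Monotone fun t => (A t : Set ℤ) := fun s t hst => Finset.coe_subset.2 (hA hst)
  refine ⟨⋃ t, (A t : Set ℤ), fun n => ?_, ?_⟩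
  · rw [repFn_eq]
    refine le_antisymm (MS_iUnion_encard_le hAm h n _ fun t => hle t n) ?_
    by_contra hcon
    push Not at hcon
    have hsub : ∀ t, (MS (A t : Set ℤ) h n).encard ≤ (MS (⋃ t, (A t : Set ℤ)) h n).encard :=
      fun t => Set.encard_le_encard (MS_mono (subset_iUnion (fun t => (A t : Set ℤ)) t) _ _)
    -- An integer that never reached `f n` would gain a representation each time it is scheduled.
    have hgrow : ∀ k : ℕ, ∃ t, (k : ℕ∞) ≤ (MS (A t : Set ℤ) h n).encard := by
      intro k
      induction k with
      | zero => exact ⟨0, by simp⟩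
      | succ k ih =>
        obtain ⟨t, ht⟩ := ih
        obtain ⟨s, hts, rfl⟩ := hσ n t
        refine ⟨s + 1, le_trans ?_ (hinc s ((hsub s).trans_lt hcon))⟩
        push_cast
        gcongr
        exact ht.trans (Set.encard_le_encard (MS_mono (hAm hts) _ _))
    have htop : (MS (⋃ t, (A t : Set ℤ)) h n).encard = ⊤ :=
      ENat.eq_top_iff_forall_ge.2 fun k => (hgrow k).elim fun t ht => ht.trans (hsub t)
    rw [htop] at hcon
    exact not_top_lt hcon
  · have hM : (0 : ℝ) < Mst h J := by
      have : 0 < Mst h J := by unfold Mst; omega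
      exact_mod_cast this
    refine density hM (by linarith : (0 : ℝ) < (h : ℝ) + dlt h J) hA hc ?_
    have h0 : (0 : ℝ) < h := by linarith
    have h1 : (0 : ℝ) < (h : ℝ) + dlt h J := by linarith
    have h2 : (1 : ℝ) / h - 1 / (h + dlt h J) = dlt h J / (h * (h + dlt h J)) := by
      field_simp; ring
    have h3 : dlt h J / (h * (h + dlt h J)) ≤ dlt h J :=
      div_le_self hd0 (by nlinarith)
    linarith
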